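/- Let X be a real Banach space and B : X → X a map such that (i) B is continuous, (ii) the image under B of every bounded subset of X has compact closure, and (iii) there exists a constant C such that ‖z‖ ≤ C for all z ∈ X and all σ ∈ [0, 1] satisfying z = σ·B(z). Then B has a fixed point, i.e., there exists z ∈ X with B(z) = z. -/

import Mathlib

open MeasureTheory Polynomial

section Brouwer
variable {E : Type*} [NormedAddCommGroup E] [InnerProductSpace ℝ E] [FiniteDimensional ℝ E]

theorem ls_det_poly (A : E →L[ℝ] E) :
    ∃ p : ℝ[X], p.natDegree ≤ Module.finrank ℝ E ∧
      ∀ t : ℝ, p.eval t = (ContinuousLinearMap.id ℝ E + t • A).det := by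
  let b := Module.finBasis ℝ E
  let M := LinearMap.toMatrix b b (A : E →ₗ[ℝ] E)
  refine ⟨Matrix.det ((X : ℝ[X]) • M.map C + (1 : Matrix _ _ ℝ).map C), ?_, ?_⟩
  · simpa using natDegree_det_X_add_C_le M 1
  · intro t
    have h1 : (ContinuousLinearMap.id ℝ E + t • A).det
        = LinearMap.det ((LinearMap.id : E →ₗ[ℝ] E) + t • (A : E →ₗ[ℝ] E)) := rfl
    rw [h1, ← LinearMap.det_toMatrix b, ← Polynomial.coe_evalRingHom, RingHom.map_det]
    congr 1
    ext i j
    by_cases hij : i = j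
    · subst hij
      simp [M, LinearMap.toMatrix_apply]
      ring
    · simp [M, LinearMap.toMatrix_apply, hij]
      exact mul_comm _ _

theorem ls_int_poly {α : Type*} [MeasurableSpace α] (μ : Measure α) (q : α → ℝ → ℝ) (N : ℕ)
    (hq : ∀ x, ∃ p : ℝ[X], p.natDegree ≤ N ∧ ∀ t : ℝ, p.eval t = q x t)
    (hint : ∀ t, Integrable (fun x => q x t) μ) :
    ∃ P : ℝ[X], ∀ t : ℝ, P.eval t = ∫ x, q x t ∂μ := by
  let s := Finset.range (N + 1)
  let v : ℕ → ℝ := fun i => i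
  have hv : Set.InjOn v s := fun a _ b _ h => by simpa [v] using h
  refine ⟨Lagrange.interpolate s v (fun i => ∫ x, q x (v i) ∂μ), fun t => ?_⟩
  have key : ∀ x, q x t = ∑ i ∈ s, q x (v i) * (Lagrange.basis s v i).eval t := by
    intro x
    obtain ⟨p, hp, hpe⟩ := hq x
    have hd : p.degree < s.card := by
      refine lt_of_le_of_lt p.degree_le_natDegree ?_
      simp only [s, Finset.card_range]
      exact_mod_cast Nat.lt_succ_of_le hp
    have := congrArg (Polynomial.eval t) (Lagrange.eq_interpolate hv hd)
    rw [← hpe, this, Lagrange.interpolate_apply, eval_finsetSum]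
    simp [hpe]
  simp_rw [key]
  rw [integral_finsetSum _ (fun i _ => (hint (v i)).mul_const _)]
  rw [Lagrange.interpolate_apply, eval_finsetSum]
  simp [integral_mul_const]

theorem ls_det_pos (A : E →L[ℝ] E) (t : ℝ) (ht : 0 ≤ t) (h : t * ‖A‖ < 1) :
    0 < (ContinuousLinearMap.id ℝ E + t • A).det := by
  obtain ⟨p, -, hp⟩ := ls_det_poly A
  rw [← hp]
  by_contra hneg
  push Not at hneg
  have h0 : p.eval 0 = 1 := by rw [hp]; simp [ContinuousLinearMap.det]
  have := intermediate_value_Icc' ht (p.continuous.continuousOn (s := Set.Icc 0 t))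
  obtain ⟨s, hs, hs0⟩ := this ⟨hneg, by rw [h0]; exact zero_le_one⟩
  simp only at hs0
  rw [hp] at hs0
  obtain ⟨v, hv, hv0⟩ := Submodule.exists_mem_ne_zero_of_ne_bot
    (LinearMap.bot_lt_ker_of_det_eq_zero
      (f := ((ContinuousLinearMap.id ℝ E + s • A : E →L[ℝ] E) : E →ₗ[ℝ] E)) hs0).ne'
  have hv' : v + s • A v = 0 := by simpa using hv
  have h1 : ‖v‖ = s * ‖A v‖ := by
    conv_lhs => rw [eq_neg_of_add_eq_zero_left hv']
    rw [norm_neg, norm_smul, Real.norm_of_nonneg hs.1]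
  have h2 := A.le_opNorm v
  have h3 : 0 < ‖v‖ := norm_pos_iff.2 hv0
  have h4 : s * ‖A v‖ ≤ t * (‖A‖ * ‖v‖) :=
    mul_le_mul hs.2 h2 (norm_nonneg _) ht
  nlinarith

theorem ls_bij (g : E → E) (K : NNReal) (hK : LipschitzWith K g) (t : ℝ) (ht : 0 ≤ t)
    (htK : t * K < 1) : Function.Bijective (fun x => x + t • g x) := by
  constructor
  · intro x y hxy
    simp only at hxy
    have h1 : x - y = t • (g y - g x) := by
      rw [smul_sub, sub_eq_sub_iff_add_eq_add, hxy, add_comm]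
    have h2 : ‖x - y‖ = t * ‖g y - g x‖ := by
      conv_lhs => rw [h1]
      rw [norm_smul, Real.norm_of_nonneg ht]
    have h3 := hK.norm_sub_le y x
    rw [norm_sub_rev y x] at h3
    by_contra hne
    have h4 : 0 < ‖x - y‖ := norm_pos_iff.2 (sub_ne_zero.2 hne)
    have := mul_le_mul_of_nonneg_left h3 ht
    nlinarith
  · intro y
    let T : E → E := fun x => y - t • g x
    have hT : ContractingWith (Real.toNNReal t * K) T := by
      constructor
      · rw [← NNReal.coe_lt_coe]; simpa [ht] using htK
      · refine LipschitzWith.of_dist_le_mul fun a b => ?_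
        have h3 := hK.norm_sub_le b a
        have : T a - T b = t • (g b - g a) := by simp only [T, smul_sub]; abel
        rw [dist_eq_norm, this, norm_smul, Real.norm_of_nonneg ht, dist_eq_norm,
          norm_sub_rev a b]
        simp only [NNReal.coe_mul, Real.coe_toNNReal _ ht, mul_assoc]
        exact mul_le_mul_of_nonneg_left h3 ht
    refine ⟨hT.fixedPoint T, ?_⟩
    have := hT.fixedPoint_isFixedPt
    have h : y - t • g (hT.fixedPoint T) = hT.fixedPoint T := this
    simp only
    rw [← sub_eq_iff_eq_add.1 h]

variable [MeasurableSpace E] [BorelSpace E]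

theorem ls_identity (g : E → E) (hg : ContDiff ℝ 1 g) (R : ℝ)
    (hsupp : ∀ x, R < ‖x‖ → g x = 0) (M : ℝ) (k : ℕ) :
    ∫ x in Metric.closedBall (0 : E) R, (M - ‖x + g x‖ ^ 2) ^ k *
      (ContinuousLinearMap.id ℝ E + fderiv ℝ g x).det
    = ∫ x in Metric.closedBall (0 : E) R, (M - ‖x‖ ^ 2) ^ k := by
  have hcs : HasCompactSupport g := by
    refine HasCompactSupport.intro (isCompact_closedBall (0 : E) R) fun x hx => hsupp x ?_
    simpa using hx
  obtain ⟨K, hK⟩ := hg.lipschitzWith_of_hasCompactSupport hcs one_ne_zero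
  let q : E → ℝ → ℝ := fun x t => (M - ‖x + t • g x‖ ^ 2) ^ k *
      (ContinuousLinearMap.id ℝ E + t • fderiv ℝ g x).det
  have hfd : Continuous (fderiv ℝ g) := hg.continuous_fderiv one_ne_zero
  have hgc := hg.continuous
  have hqc : ∀ t, Continuous fun x => q x t := by
    intro t
    have : Continuous fun x => (ContinuousLinearMap.id ℝ E + t • fderiv ℝ g x).det :=
      ContinuousLinearMap.continuous_det.comp (by fun_prop)
    simp only [q]
    fun_prop
  obtain ⟨P, hP⟩ := ls_int_poly (volume.restrict (Metric.closedBall (0 : E) R)) q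
    (2 * k + Module.finrank ℝ E) (by
      intro x
      obtain ⟨p, hp, hpe⟩ := ls_det_poly (fderiv ℝ g x)
      refine ⟨(C M - (C (‖x‖ ^ 2) + C (2 * inner ℝ x (g x)) * X + C (‖g x‖ ^ 2) * X ^ 2)) ^ k * p,
        ?_, ?_⟩
      · refine natDegree_mul_le.trans (add_le_add (natDegree_pow_le.trans ?_) hp)
        rw [mul_comm]
        refine Nat.mul_le_mul_right _ ?_
        compute_degree
      · intro t
        simp only [q, ← hpe, eval_mul, eval_pow, eval_sub, eval_add, eval_C, eval_X]
        rw [norm_add_sq_real, inner_smul_right, norm_smul, mul_pow, Real.norm_eq_abs, sq_abs]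
        ring)
    (fun t => (hqc t).continuousOn.integrableOn_compact (isCompact_closedBall _ _))
  have hsmall : ∀ t : ℝ, 0 ≤ t → t * K < 1 →
      P.eval t = ∫ x in Metric.closedBall (0 : E) R, (M - ‖x‖ ^ 2) ^ k := by
    intro t ht htK
    have hbij := ls_bij g K hK t ht htK
    have himg : (fun x => x + t • g x) '' Metric.closedBall (0 : E) R
        = Metric.closedBall (0 : E) R := by
      rw [← compl_inj_iff, ← Set.image_compl_eq hbij]
      refine (Set.image_congr (g := id) fun x hx => ?_).trans (Set.image_id _)
      rw [hsupp x (by simpa using hx)]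
      simp
    rw [hP]
    conv_rhs => rw [← himg]
    rw [integral_image_eq_integral_abs_det_fderiv_smul volume
      (f := fun x => x + t • g x) (f' := fun x => ContinuousLinearMap.id ℝ E + t • fderiv ℝ g x) measurableSet_closedBall
      (fun x _ => ((hasFDerivAt_id x).add
        (((hg.differentiable one_ne_zero) x).hasFDerivAt.const_smul t)).hasFDerivWithinAt)
      hbij.1.injOn]
    refine integral_congr_ae (Filter.Eventually.of_forall fun x => ?_)
    have hd : 0 < (ContinuousLinearMap.id ℝ E + t • fderiv ℝ g x).det := by
      refine ls_det_pos _ t ht (lt_of_le_of_lt ?_ htK)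
      exact mul_le_mul_of_nonneg_left (norm_fderiv_le_of_lipschitz ℝ hK) ht
    simp only [q, smul_eq_mul, abs_of_pos hd]
    ring
  have hPc : P = C (∫ x in Metric.closedBall (0 : E) R, (M - ‖x‖ ^ 2) ^ k) := by
    refine Polynomial.eq_of_infinite_eval_eq _ _ (Set.Infinite.mono (s := Set.Ico 0 (1 / ((K:ℝ) + 1))) ?_ ?_)
    · rintro t ⟨ht0, ht1⟩
      rw [Set.mem_ofPred_eq, eval_C]
      refine hsmall t ht0 ?_
      have hK0 : (0 : ℝ) < K + 1 := by positivity
      rw [lt_div_iff₀ hK0] at ht1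
      nlinarith
    · exact Set.Ico_infinite (by positivity)
  have := hP 1
  rw [hPc, eval_C] at this
  rw [this]
  simp [q]

theorem ls_zero (g : E → E) (hg : ContDiff ℝ 1 g) (R : ℝ) (hR : 0 < R)
    (hsupp : ∀ x, R < ‖x‖ → g x = 0) : ∃ x, x + g x = 0 := by
  by_contra! hne
  have hgc := hg.continuous
  have hcomp := isCompact_closedBall (0 : E) R
  have hne' : (Metric.closedBall (0 : E) R).Nonempty := ⟨0, by simp [hR.le]⟩
  have hFc : Continuous fun x => ‖x + g x‖ := by fun_prop
  obtain ⟨x0, -, hx0⟩ := hcomp.exists_isMinOn hne' hFc.continuousOn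
  obtain ⟨x1, -, hx1⟩ := hcomp.exists_isMaxOn hne' hFc.continuousOn
  have hdc : Continuous fun x => |(ContinuousLinearMap.id ℝ E + fderiv ℝ g x).det| := by
    have hfd : Continuous (fderiv ℝ g) := hg.continuous_fderiv one_ne_zero
    exact (ContinuousLinearMap.continuous_det.comp (by fun_prop)).abs
  obtain ⟨x2, -, hx2⟩ := hcomp.exists_isMaxOn hne' hdc.continuousOn
  set D := |(ContinuousLinearMap.id ℝ E + fderiv ℝ g x2).det|
  set c := min ‖x0 + g x0‖ R with hc
  have hc0 : 0 < c := lt_min (norm_pos_iff.2 (hne x0)) hR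
  set M := max ‖x1 + g x1‖ R ^ 2 with hM
  have hRM : R ^ 2 ≤ M := by
    rw [hM]; gcongr; exact le_max_right _ _
  have hcR : c ^ 2 ≤ R ^ 2 := by gcongr; exact min_le_right _ _
  set a := M - c ^ 2 with ha
  set b := M - c ^ 2 / 4 with hb
  have ha0 : 0 ≤ a := by linarith
  have hab : a < b := by nlinarith
  set V := volume.real (Metric.closedBall (0 : E) R)
  set W := volume.real (Metric.closedBall (0 : E) (c / 2))
  have hW : 0 < W := by
    refine ENNReal.toReal_pos ?_ (measure_closedBall_lt_top).ne
    exact (Metric.measure_closedBall_pos volume 0 (by positivity)).ne'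
  have key : ∀ k : ℕ, b ^ k * W ≤ a ^ k * D * V := by
    intro k
    have hup : ‖∫ x in Metric.closedBall (0 : E) R, (M - ‖x + g x‖ ^ 2) ^ k *
      (ContinuousLinearMap.id ℝ E + fderiv ℝ g x).det‖ ≤ a ^ k * D * V := by
      refine norm_setIntegral_le_of_norm_le_const measure_closedBall_lt_top fun x hx => ?_
      have e1 : c ≤ ‖x + g x‖ := (min_le_left _ _).trans (hx0 hx)
      have e2 : ‖x + g x‖ ≤ max ‖x1 + g x1‖ R := (hx1 hx).trans (le_max_left _ _)
      have e3 : c ^ 2 ≤ ‖x + g x‖ ^ 2 := by gcongr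
      have e4 : ‖x + g x‖ ^ 2 ≤ M := by rw [hM]; gcongr
      have e5 : |(ContinuousLinearMap.id ℝ E + fderiv ℝ g x).det| ≤ D := hx2 hx
      rw [norm_mul, norm_pow, Real.norm_eq_abs, Real.norm_eq_abs, abs_of_nonneg (by linarith)]
      gcongr
      · linarith
    have hlow : b ^ k * W ≤ ∫ x in Metric.closedBall (0 : E) R, (M - ‖x‖ ^ 2) ^ k := by
      have hint : IntegrableOn (fun x : E => (M - ‖x‖ ^ 2) ^ k) (Metric.closedBall (0 : E) R) :=
        Continuous.continuousOn (by fun_prop) |>.integrableOn_compact hcomp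
      have hsub : Metric.closedBall (0 : E) (c / 2) ⊆ Metric.closedBall (0 : E) R :=
        Metric.closedBall_subset_closedBall (by have := min_le_right ‖x0 + g x0‖ R; linarith)
      have h1 : ∫ x in Metric.closedBall (0 : E) (c / 2), (M - ‖x‖ ^ 2) ^ k
          ≤ ∫ x in Metric.closedBall (0 : E) R, (M - ‖x‖ ^ 2) ^ k := by
        refine setIntegral_mono_set hint ?_ hsub.eventuallyLE
        refine (ae_restrict_mem measurableSet_closedBall).mono fun x hx => ?_
        have hx' : ‖x‖ ≤ R := by simpa using hx
        have : ‖x‖ ^ 2 ≤ R ^ 2 := by gcongr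
        exact pow_nonneg (by linarith) k
      refine le_trans ?_ h1
      have h2 : ∫ x in Metric.closedBall (0 : E) (c / 2), b ^ k = b ^ k * W := by
        simp [W, mul_comm]
      rw [← h2]
      refine setIntegral_mono_on ?_ (hint.mono_set hsub) measurableSet_closedBall fun x hx => ?_
      · exact integrableOn_const measure_closedBall_lt_top.ne
      · have hx' : ‖x‖ ≤ c / 2 := by simpa using hx
        have : ‖x‖ ^ 2 ≤ (c / 2) ^ 2 := by gcongr
        have hb0 : 0 ≤ b := by linarith
        gcongr
        rw [hb]; linarith
    rw [ls_identity g hg R hsupp M k] at hup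
    exact hlow.trans ((le_abs_self _).trans hup)
  have hb0 : 0 < b := by linarith
  have htend : Filter.Tendsto (fun k : ℕ => (a / b) ^ k * (D * V)) Filter.atTop (nhds (0 * (D * V))) :=
    (tendsto_pow_atTop_nhds_zero_of_lt_one (by positivity) ((div_lt_one hb0).2 hab)).mul_const _
  have : W ≤ 0 * (D * V) := by
    refine ge_of_tendsto' htend fun k => ?_
    have hbk : 0 < b ^ k := pow_pos hb0 k
    rw [div_pow, div_mul_eq_mul_div, le_div_iff₀ hbk]
    have := key k
    linarith
  linarith

end Brouwer

theorem ls_brouwer {E : Type*} [NormedAddCommGroup E] [InnerProductSpace ℝ E]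
    [FiniteDimensional ℝ E] (G : E → E) (hG : Continuous G) (r : ℝ) (hr : ∀ x, ‖G x‖ ≤ r) :
    ∃ x, G x = x := by
  borelize E
  have hr0 : 0 ≤ r := (norm_nonneg _).trans (hr 0)
  have happ : ∀ δ : ℝ, 0 < δ → δ ≤ 1 → ∃ x ∈ Metric.closedBall (0 : E) (r + 1), ‖x - G x‖ ≤ δ := by
    intro δ hδ hδ1
    let χ : E → ℝ := fun x => max 0 (min 1 (r + 2 - ‖x‖))
    have hχ : Continuous χ := by fun_prop
    obtain ⟨h, hh, hclose, hs⟩ := (hχ.smul hG).exists_contDiff_approx 1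
      (ε := fun _ => δ) continuous_const (fun _ => hδ)
    have hzero : ∀ x, r + 2 < ‖x‖ → h x = 0 := by
      intro x hx
      by_contra hne
      have := hs hne
      apply this
      have : χ x = 0 := by
        simp only [χ]
        apply max_eq_left
        exact (min_le_right _ _).trans (by linarith)
      simp [this]
    obtain ⟨x, hx⟩ := ls_zero (fun x => - h x) hh.neg (r + 2) (by linarith)
      (fun x hx => by simp [hzero x hx])
    have hx' : x = h x := by rw [← sub_eq_add_neg] at hx; exact sub_eq_zero.1 hx
    have hcl : ‖h x - χ x • G x‖ < δ := by
      have := hclose x; rwa [dist_eq_norm] at this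
    have hχ1 : χ x ≤ 1 := max_le zero_le_one (min_le_left _ _)
    have hχ0 : 0 ≤ χ x := le_max_left _ _
    have hn : ‖x‖ ≤ r + 1 := by
      have e1 : ‖χ x • G x‖ ≤ r := by
        rw [norm_smul, Real.norm_of_nonneg hχ0]
        nlinarith [hr x, norm_nonneg (G x)]
      have e2 := norm_le_norm_add_norm_sub' (h x) (χ x • G x)
      rw [← hx'] at e2 hcl
      linarith
    refine ⟨x, by simpa using hn, ?_⟩
    have : χ x = 1 := by
      simp only [χ]
      rw [min_eq_left (by linarith), max_eq_right zero_le_one]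
    rw [this, one_smul, ← hx'] at hcl
    exact hcl.le
  have hc : Continuous fun x => ‖x - G x‖ := by fun_prop
  obtain ⟨x0, -, hx0⟩ := (isCompact_closedBall (0 : E) (r + 1)).exists_isMinOn
    ⟨0, by simp; linarith⟩ hc.continuousOn
  refine ⟨x0, ?_⟩
  by_contra hne
  have hpos : 0 < ‖x0 - G x0‖ := norm_pos_iff.2 (sub_ne_zero.2 (Ne.symm hne))
  obtain ⟨x, hx, hxδ⟩ := happ (min 1 (‖x0 - G x0‖ / 2)) (lt_min one_pos (by linarith))
    (min_le_left _ _)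
  have h1 : ‖x0 - G x0‖ ≤ ‖x - G x‖ := hx0 hx
  have h2 := min_le_right 1 (‖x0 - G x0‖ / 2)
  linarith


theorem ls_schauder {X : Type*} [NormedAddCommGroup X] [NormedSpace ℝ X] (T : X → X)
    (hT : Continuous T) (K : Set X) (hK : IsCompact K) (hTK : ∀ x, T x ∈ K) :
    ∃ x, T x = x := by
  have happ : ∀ ε : ℝ, 0 < ε → ∃ z, ‖T z - z‖ ≤ ε := by
    intro ε hε
    obtain ⟨s, -, hsf, hs⟩ := hK.finite_cover_balls hε
    have : Fintype s := hsf.fintype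
    let m : s → X → ℝ := fun i x => max 0 (ε - ‖T x - i‖)
    have hm : ∀ i, Continuous (m i) := fun i => by fun_prop
    have hm0 : ∀ i x, 0 ≤ m i x := fun i x => le_max_left _ _
    have hS : ∀ x, 0 < ∑ i, m i x := by
      intro x
      obtain ⟨y, hy, hxy⟩ := Set.mem_iUnion₂.1 (hs (hTK x))
      refine Finset.sum_pos' (fun i _ => hm0 i x) ⟨⟨y, hy⟩, Finset.mem_univ _, ?_⟩
      rw [Metric.mem_ball, dist_eq_norm] at hxy
      exact lt_max_of_lt_right (by simpa using hxy)
    let w : s → X → ℝ := fun i x => m i x / ∑ j, m j x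
    have hw : ∀ i, Continuous (w i) := fun i =>
      (hm i).div (continuous_finsetSum _ fun j _ => hm j) fun x => (hS x).ne'
    have hw0 : ∀ i x, 0 ≤ w i x := fun i x => div_nonneg (hm0 i x) (hS x).le
    have hw1 : ∀ x, ∑ i, w i x = 1 := fun x => by
      simp only [w]; rw [← Finset.sum_div, div_self (hS x).ne']
    let Q : EuclideanSpace ℝ s → X := fun u => ∑ i, u i • (i : X)
    have hQ : Continuous Q := by fun_prop
    let G : EuclideanSpace ℝ s → EuclideanSpace ℝ s := fun u => WithLp.toLp 2 fun i => w i (Q u)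
    have hG : Continuous G :=
      (PiLp.continuous_toLp 2 _).comp (continuous_pi fun i => (hw i).comp hQ)
    obtain ⟨u, hu⟩ := ls_brouwer G hG 1 (by
      intro u
      rw [EuclideanSpace.norm_eq]
      refine Real.sqrt_le_one.2 ?_
      rw [← hw1 (Q u)]
      refine Finset.sum_le_sum fun i _ => ?_
      have h1 : w i (Q u) ≤ 1 := by
        rw [← hw1 (Q u)]
        exact Finset.single_le_sum (f := fun i => w i (Q u)) (fun j _ => hw0 j _) (Finset.mem_univ i)
      simp only [G, Real.norm_eq_abs, sq_abs]
      nlinarith [hw0 i (Q u)])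
    refine ⟨Q u, ?_⟩
    set z := Q u with hz
    have hz' : z = ∑ i, w i z • (i : X) := by
      have : ∀ i, u i = w i z := fun i => by
        conv_lhs => rw [← hu]
      conv_lhs => rw [hz]
      simp only [Q, this]
    have hd : T z - z = ∑ i, w i z • (T z - (i : X)) := by
      simp only [smul_sub, Finset.sum_sub_distrib]
      rw [← Finset.sum_smul, hw1, one_smul, ← hz']
    rw [hd]
    calc ‖∑ i, w i z • (T z - (i : X))‖ ≤ ∑ i, ‖w i z • (T z - (i : X))‖ := norm_sum_le _ _
      _ ≤ ∑ i, w i z * ε := by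
        refine Finset.sum_le_sum fun i _ => ?_
        rw [norm_smul, Real.norm_of_nonneg (hw0 i z)]
        rcases le_total ‖T z - (i : X)‖ ε with h | h
        · exact mul_le_mul_of_nonneg_left h (hw0 i z)
        · have : w i z = 0 := by
            have : m i z = 0 := max_eq_left (by linarith)
            simp [w, this]
          simp [this]
      _ = ε := by rw [← Finset.sum_mul, hw1, one_mul]
  choose z hz using fun n : ℕ => happ (1 / ((n : ℝ) + 1)) (by positivity)
  obtain ⟨y, -, φ, hφ, hy⟩ := hK.tendsto_subseq fun n => hTK (z n)
  have h0 : Filter.Tendsto (fun n => T (z (φ n)) - z (φ n)) Filter.atTop (nhds 0) :=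
    squeeze_zero_norm (fun n => hz (φ n))
      (tendsto_one_div_add_atTop_nhds_zero_nat.comp hφ.tendsto_atTop)
  have hzy : Filter.Tendsto (fun n => z (φ n)) Filter.atTop (nhds y) := by
    simpa using hy.sub h0
  exact ⟨y, tendsto_nhds_unique ((hT.tendsto y).comp hzy) hy⟩

theorem stmt_13 {X : Type*} [NormedAddCommGroup X] [NormedSpace ℝ X] [CompleteSpace X]
    (B : X → X) (hcont : Continuous B)
    (hcompact : ∀ S : Set X, Bornology.IsBounded S → IsCompact (closure (B '' S)))
    (C : ℝ) (hbound : ∀ (z : X), ∀ σ ∈ Set.Icc (0 : ℝ) 1, z = σ • B z → ‖z‖ ≤ C) :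
    ∃ z : X, B z = z := by
  set M : ℝ := max C 0 + 1 with hM
  have hM0 : 0 < M := by positivity
  have hMC : C < M := by have := le_max_left C 0; linarith
  let ρ : X → X := fun z => (M / max M ‖z‖) • z
  have hpos : ∀ z : X, 0 < max M ‖z‖ := fun z => lt_max_of_lt_left hM0
  have hρ : Continuous ρ :=
    (continuous_const.div (by fun_prop) fun z => (hpos z).ne').smul continuous_id
  have hρM : ∀ z, ‖ρ z‖ ≤ M := by
    intro z
    simp only [ρ]
    rw [norm_smul, Real.norm_of_nonneg (by have := hpos z; positivity), div_mul_eq_mul_div,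
      div_le_iff₀ (hpos z)]
    exact mul_le_mul_of_nonneg_left (le_max_right _ _) hM0.le
  obtain ⟨z, hz⟩ := ls_schauder (fun z => B (ρ z)) (hcont.comp hρ) _
    (hcompact (Metric.closedBall 0 M) Metric.isBounded_closedBall)
    (fun x => subset_closure ⟨ρ x, by simpa using hρM x, rfl⟩)
  rcases le_or_gt ‖z‖ M with h | h
  · have : ρ z = z := by simp only [ρ]; rw [max_eq_left h, div_self hM0.ne', one_smul]
    exact ⟨z, by rwa [this] at hz⟩
  · exfalso
    have hz0 : 0 < ‖z‖ := hM0.trans h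
    have e : ρ z = (M / ‖z‖) • z := by simp only [ρ]; rw [max_eq_right h.le]
    have h1 := hbound (ρ z) (M / ‖z‖) ⟨by positivity, (div_le_one hz0).2 h.le⟩ (by rw [hz, e])
    rw [e, norm_smul, Real.norm_of_nonneg (by positivity), div_mul_cancel₀ _ hz0.ne'] at h1
    linarith
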